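/- Let $X$ be a standard Borel space with a Borel probability measure $\mu$, let $Y$ be a Polish space, and let $p: Y \to X$ be a Borel map such that $\mu(p(Y)) = 1$. Let $M \subset P(Y)$ be the set of all Borel probability measures $\sigma$ on $Y$ with $p_*\sigma = \mu$. If for $\mu$-almost all $x \in X$ the fiber $p^{-1}(x)$ is compact, then $M$ is a non-empty convex compact subset of $P(Y)$ (with respect to the weak* topology on $P(Y)$). -/

import Mathlib

open MeasureTheory
open scoped ENNReal NNReal
open Set Filter Topology TopologicalSpace

/-- A point in the closure of the image of every box `{a | a i ≤ k i for i < n}` is the image of a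
point of the full box. -/
lemma iInter_closure_image_box_subset {X : Type*} [TopologicalSpace X] [T2Space X]
    {f : (ℕ → ℕ) → X} (hf : Continuous f) (k : ℕ → ℕ) :
    ⋂ n, closure (f '' {a | ∀ i < n, a i ≤ k i}) ⊆ f '' univ.pi fun i ↦ Iic (k i) := by
  intro x hx
  rw [mem_iInter] at hx
  have hanti : Antitone fun n ↦ {a : ℕ → ℕ | ∀ i < n, a i ≤ k i} :=
    fun m n hmn a ha i hi ↦ ha i (hi.trans_le hmn)
  have hne : (⨅ n, comap f (𝓝 x) ⊓ 𝓟 {a : ℕ → ℕ | ∀ i < n, a i ≤ k i}).NeBot := by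
    refine iInf_neBot_of_directed ?_ fun n ↦ ?_
    · exact Antitone.directed_ge fun m n hmn ↦ inf_le_inf_left _ (principal_mono.2 (hanti hmn))
    · rw [← map_neBot_iff f, Filter.push_pull', map_principal]
      exact mem_closure_iff_clusterPt.1 (hx n)
  obtain ⟨𝒰, h𝒰⟩ := Ultrafilter.exists_le (⨅ n, comap f (𝓝 x) ⊓
    𝓟 {a : ℕ → ℕ | ∀ i < n, a i ≤ k i})
  have hcoord (i : ℕ) : ∃ c ∈ Iic (k i), Tendsto (fun a : ℕ → ℕ ↦ a i) 𝒰 (𝓝 c) := by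
    refine ((finite_Iic (k i)).isCompact).ultrafilter_le_nhds (𝒰.map fun a ↦ a i) ?_
    have := h𝒰.trans ((iInf_le _ (i + 1)).trans inf_le_right)
    rw [le_principal_iff] at this ⊢
    exact Filter.mem_map.2 (mem_of_superset this fun a ha ↦ ha i i.lt_succ_self)
  choose c hc hlim using hcoord
  refine ⟨c, fun i _ ↦ hc i, ?_⟩
  have h1 : Tendsto f 𝒰 (𝓝 (f c)) := (hf.tendsto c).comp (tendsto_pi_nhds.2 hlim)
  have h2 : Tendsto f 𝒰 (𝓝 x) :=
    tendsto_iff_comap.2 (h𝒰.trans ((iInf_le _ 0).trans inf_le_left))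
  exact tendsto_nhds_unique h1 h2

/-- Inner approximation of the outer measure of a continuous image of Baire space by compact
subsets. -/
lemma exists_isCompact_subset_range_le_measure {X : Type*} [TopologicalSpace X] [T2Space X]
    [MeasurableSpace X] [BorelSpace X] (μ : Measure X) [IsFiniteMeasure μ]
    {f : (ℕ → ℕ) → X} (hf : Continuous f) {t : ℝ≥0∞} (ht : t < μ (range f)) :
    ∃ K ⊆ range f, IsCompact K ∧ t ≤ μ K := by
  have hstep (S : {S : Set (ℕ → ℕ) // t < μ (f '' S)}) (n : ℕ) :
      ∃ m, t < μ (f '' (S ∩ {a | a n ≤ m})) := by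
    have hmono : Monotone fun m ↦ f '' (S ∩ {a : ℕ → ℕ | a n ≤ m}) :=
      fun m m' h ↦ image_mono (inter_subset_inter_right _ fun a ha ↦ le_trans ha h)
    have hU : ⋃ m, f '' (S ∩ {a : ℕ → ℕ | a n ≤ m}) = f '' S := by
      rw [← image_iUnion, ← inter_iUnion, iUnion_eq_univ_iff.2 fun a ↦ ⟨a n, le_refl (a n)⟩, inter_univ]
    have := S.2
    rwa [← hU, hmono.measure_iUnion, lt_iSup_iff] at this
  choose m hm using hstep
  let S : ℕ → {S : Set (ℕ → ℕ) // t < μ (f '' S)} := fun n ↦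
    Nat.rec ⟨univ, by rwa [image_univ]⟩ (fun n S ↦ ⟨S ∩ {a | a n ≤ m S n}, hm S n⟩) n
  let k : ℕ → ℕ := fun n ↦ m (S n) n
  have hS (n : ℕ) : (S n).1 = {a | ∀ i < n, a i ≤ k i} := by
    induction n with
    | zero => simp [S]
    | succ n ih =>
      have : (S (n + 1)).1 = (S n).1 ∩ {a | a n ≤ k n} := rfl
      rw [this, ih]
      ext a
      exact Nat.forall_lt_succ_right.symm
  refine ⟨f '' univ.pi fun i ↦ Iic (k i), image_subset_range _ _,
    (isCompact_univ_pi fun i ↦ (finite_Iic (k i)).isCompact).image hf, ?_⟩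
  refine le_trans ?_ (measure_mono (iInter_closure_image_box_subset hf k))
  refine ge_of_tendsto' (tendsto_measure_iInter_atTop
    (fun n ↦ isClosed_closure.measurableSet.nullMeasurableSet)
    (fun m n hmn ↦ closure_mono (image_mono fun a ha i hi ↦ ha i (hi.trans_le hmn)))
    ⟨0, measure_ne_top _ _⟩) fun n ↦ ?_
  exact (hS n ▸ (S n).2).le.trans (measure_mono subset_closure)

/-- Analytic sets are measurable with respect to the completion of every finite Borel measure. -/
lemma MeasureTheory.AnalyticSet.nullMeasurableSet {X : Type*} [TopologicalSpace X] [T2Space X]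
    [MeasurableSpace X] [BorelSpace X] {s : Set X} (hs : AnalyticSet s)
    (μ : Measure X) [IsFiniteMeasure μ] : NullMeasurableSet s μ := by
  rw [AnalyticSet] at hs
  obtain rfl | ⟨f, hf, rfl⟩ := hs
  · exact .empty
  rcases eq_zero_or_pos (μ (range f)) with h0 | h0
  · exact .of_null h0
  obtain ⟨u, -, hu, hlim⟩ := exists_seq_strictMono_tendsto' h0
  choose K hKs hK hKu using fun n ↦ exists_isCompact_subset_range_le_measure μ hf (hu n).2
  have hU : MeasurableSet (⋃ n, K n) := .iUnion fun n ↦ (hK n).measurableSet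
  refine hU.nullMeasurableSet.congr (ae_eq_of_subset_of_measure_ge (iUnion_subset hKs) ?_
    hU.nullMeasurableSet (measure_ne_top _ _))
  exact le_of_tendsto' hlim fun n ↦ (hKu n).trans (measure_mono (subset_iUnion K n))

/-- If the fibers of `p` over a compact set `C` are compact and depend upper semicontinuously on
the base point, then `p ⁻¹' C` is compact. -/
lemma isCompact_preimage_of_fibers {X Y : Type*} [TopologicalSpace X] [TopologicalSpace Y]
    {p : Y → X} {C : Set X} (hC : IsCompact C) (hfib : ∀ x ∈ C, IsCompact (p ⁻¹' {x}))
    (husc : ∀ x ∈ C, ∀ U, IsOpen U → p ⁻¹' {x} ⊆ U → ∀ᶠ x' in 𝓝[C] x, p ⁻¹' {x'} ⊆ U) :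
    IsCompact (p ⁻¹' C) := by
  rw [isCompact_iff_ultrafilter_le_nhds]
  intro 𝒰 h𝒰
  rw [le_principal_iff] at h𝒰
  obtain ⟨x, hxC, hx⟩ := hC.ultrafilter_le_nhds (𝒰.map p) (le_principal_iff.2 h𝒰)
  by_contra! hcon
  obtain ⟨U, hU, hxU, hU𝒰⟩ : ∃ U, IsOpen U ∧ p ⁻¹' {x} ⊆ U ∧ U ∉ 𝒰 := by
    refine (hfib x hxC).induction_on (p := fun S ↦ ∃ U, IsOpen U ∧ S ⊆ U ∧ U ∉ 𝒰)
      ⟨∅, isOpen_empty, Subset.rfl, 𝒰.empty_notMem⟩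
      (fun S T hST ⟨U, hU, hTU, h⟩ ↦ ⟨U, hU, hST.trans hTU, h⟩)
      (fun S T ⟨U, hU, hSU, h⟩ ⟨V, hV, hTV, h'⟩ ↦ ⟨U ∪ V, hU.union hV, union_subset_union hSU hTV,
        fun hUV ↦ (Ultrafilter.union_mem_iff.1 hUV).elim h h'⟩) fun y hy ↦ ?_
    have hyC : y ∈ p ⁻¹' C := by rw [mem_preimage, show p y = x from hy]; exact hxC
    obtain ⟨s, hs, hs𝒰⟩ := Filter.not_le.1 (hcon y hyC)
    obtain ⟨U, hUs, hU, hyU⟩ := mem_nhds_iff.1 hs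
    exact ⟨U, mem_nhdsWithin_of_mem_nhds (hU.mem_nhds hyU), U, hU, Subset.rfl,
      fun h ↦ hs𝒰 (mem_of_superset h hUs)⟩
  have hmem : ∀ᶠ x' in (𝒰.map p : Filter X), p ⁻¹' {x'} ⊆ U :=
    le_inf hx (le_principal_iff.2 h𝒰) (husc x hxC U hU hxU)
  refine hU𝒰 (mem_of_superset (Filter.mem_map.1 hmem) fun y hy ↦ ?_)
  exact hy rfl

/-- The image of a Borel set under a Borel map between standard Borel spaces is measurable with
respect to the completion of every finite measure. -/
lemma MeasurableSet.nullMeasurableSet_image {X Y : Type*} [MeasurableSpace X]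
    [StandardBorelSpace X] [MeasurableSpace Y] [StandardBorelSpace Y] {p : Y → X}
    (hp : Measurable p) {s : Set Y} (hs : MeasurableSet s) (μ : Measure X) [IsFiniteMeasure μ] :
    NullMeasurableSet (p '' s) μ := by
  let := upgradeStandardBorel X
  exact (hs.analyticSet_image hp).nullMeasurableSet μ

/-- A countable family of Borel sets becomes closed in some compatible Polish topology. -/
lemma exists_polishSpace_forall_isClosed {X ι : Type*} [MeasurableSpace X] [StandardBorelSpace X]
    [Countable ι] {A : ι → Set X} (hA : ∀ i, MeasurableSet (A i)) :
    ∃ _ : TopologicalSpace X, PolishSpace X ∧ BorelSpace X ∧ ∀ i, IsClosed (A i) := by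
  classical
  let t₀ := upgradeStandardBorel X
  let g : X → ι → Bool := fun x i ↦ decide (x ∈ A i)
  have hg : Measurable g := measurable_pi_iff.2 fun i ↦
    measurable_to_bool (by simpa [g, preimage] using hA i)
  obtain ⟨t, htle, hgt, htP⟩ := hg.exists_continuous
  refine ⟨t, htP, ⟨?_⟩, fun i ↦ ?_⟩
  · rw [borel_eq_borel_of_le htP t₀.toPolishSpace htle]
    exact t₀.toBorelSpace.measurable_eq
  · have : A i = g ⁻¹' {b | b i = true} := by ext; simp [g]
    rw [this]
    exact (isClosed_eq (continuous_apply i) continuous_const).preimage hgt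

/-- Finite unions of basic open sets separate compact sets from the complements of their open
neighborhoods. -/
lemma IsCompact.exists_finset_countableBasis {Y : Type*} [TopologicalSpace Y]
    [SecondCountableTopology Y] {K V : Set Y} (hK : IsCompact K) (hV : IsOpen V) (hKV : K ⊆ V) :
    ∃ F : Finset (countableBasis Y), K ⊆ ⋃ b ∈ F, (b : Set Y) ∧ ⋃ b ∈ F, (b : Set Y) ⊆ V := by
  classical
  have hbasis (y : K) : ∃ b : countableBasis Y, (y : Y) ∈ (b : Set Y) ∧ (b : Set Y) ⊆ V := by
    obtain ⟨b, hb, hyb, hbV⟩ :=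
      (isBasis_countableBasis Y).exists_subset_of_mem_open (hKV y.2) hV
    exact ⟨⟨b, hb⟩, hyb, hbV⟩
  choose b hyb hbV using hbasis
  obtain ⟨t, ht⟩ := hK.elim_finite_subcover (fun y : K ↦ (b y : Set Y))
    (fun y ↦ isOpen_of_mem_countableBasis (b y).2) fun y hy ↦ mem_iUnion.2 ⟨⟨y, hy⟩, hyb ⟨y, hy⟩⟩
  refine ⟨t.image b, ?_, ?_⟩
  · rwa [Finset.set_biUnion_finset_image]
  · rw [Finset.set_biUnion_finset_image]
    exact iUnion₂_subset fun y _ ↦ hbV y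

/-- If almost every fiber of `p` is compact, every Borel set is approximated in measure from inside
by Borel sets with compact preimage. -/
lemma exists_measurableSet_isCompact_preimage {X : Type*} [MeasurableSpace X]
    [StandardBorelSpace X] (μ : Measure X) [IsFiniteMeasure μ]
    {Y : Type*} [TopologicalSpace Y] [PolishSpace Y] [MeasurableSpace Y] [BorelSpace Y]
    {p : Y → X} (hp : Measurable p) (hfib : ∀ᵐ x ∂μ, IsCompact (p ⁻¹' {x}))
    {B : Set X} (hB : MeasurableSet B) {ε : ℝ≥0∞} (hε : ε ≠ 0) :
    ∃ C ⊆ B, MeasurableSet C ∧ IsCompact (p ⁻¹' C) ∧ μ B ≤ μ C + ε := by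
  have hcount : Countable (countableBasis Y) := (countable_countableBasis Y).to_subtype
  let U : Finset (countableBasis Y) → Set Y := fun F ↦ ⋃ b ∈ F, (b : Set Y)
  have hUo (F) : IsOpen (U F) := isOpen_biUnion fun b _ ↦ isOpen_of_mem_countableBasis b.2
  have hnull (F) : NullMeasurableSet (p '' (U F)ᶜ) μ :=
    (hUo F).measurableSet.compl.nullMeasurableSet_image hp μ
  choose A hAsub hA hAeq using fun F ↦ (hnull F).exists_measurable_subset_ae_eq
  obtain ⟨t, _, _, hAcl⟩ := exists_polishSpace_forall_isClosed hA
  have hgood : ∀ᵐ x ∂μ, IsCompact (p ⁻¹' {x}) ∧ ∀ F, x ∉ A F → p ⁻¹' {x} ⊆ U F := by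
    filter_upwards [hfib, ae_all_iff.2 fun F ↦ (hAeq F).mem_iff] with x hx hxA
    refine ⟨hx, fun F hF y hy ↦ ?_⟩
    by_contra hyU
    exact hF ((hxA F).2 ⟨y, hyU, hy⟩)
  obtain ⟨G, hG0, hG, hGgood⟩ := hgood.exists_measurable_mem
  obtain ⟨C, hCsub, hC, hCε⟩ :=
    (hB.inter hG).exists_isCompact_lt_add (measure_ne_top μ _) hε
  refine ⟨C, hCsub.trans inter_subset_left, hC.measurableSet, ?_, ?_⟩
  · refine isCompact_preimage_of_fibers hC (fun x hx ↦ (hGgood _ (hCsub hx).2).1) ?_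
    intro x hx V hV hxV
    obtain ⟨F, hxF, hFV⟩ : ∃ F, p ⁻¹' {x} ⊆ U F ∧ U F ⊆ V :=
      (hGgood _ (hCsub hx).2).1.exists_finset_countableBasis hV hxV
    have hxA : x ∉ A F := fun h ↦ by
      obtain ⟨y, hy, hyx⟩ := hAsub F h
      exact hy (hxF hyx)
    filter_upwards [mem_nhdsWithin_of_mem_nhds ((hAcl F).isOpen_compl.mem_nhds hxA),
      self_mem_nhdsWithin] with x' hx' hx'C
    exact ((hGgood _ (hCsub hx'C).2).2 F hx').trans hFV
  · rw [← measure_inter_conull (mem_ae_iff.1 hG0)]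
    exact hCε.le

/-- A lift of `μ` is characterised by lower bounds on the Borel sets with compact preimage. -/
lemma map_eq_of_forall_isCompact_preimage_le {X : Type*} [MeasurableSpace X]
    [StandardBorelSpace X] (μ : Measure X) [IsProbabilityMeasure μ]
    {Y : Type*} [TopologicalSpace Y] [PolishSpace Y] [MeasurableSpace Y] [BorelSpace Y]
    {p : Y → X} (hp : Measurable p) (hfib : ∀ᵐ x ∂μ, IsCompact (p ⁻¹' {x}))
    (σ : Measure Y) [IsProbabilityMeasure σ]
    (h : ∀ C, MeasurableSet C → IsCompact (p ⁻¹' C) → μ C ≤ σ (p ⁻¹' C)) : σ.map p = μ := by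
  have : IsProbabilityMeasure (σ.map p) := Measure.isProbabilityMeasure_map hp.aemeasurable
  refine (Measure.eq_of_le_of_isProbabilityMeasure (Measure.le_iff.2 fun B hB ↦ ?_)).symm
  refine ENNReal.le_of_forall_pos_le_add fun ε hε _ ↦ ?_
  obtain ⟨C, hCB, hC, hpC, hμ⟩ := exists_measurableSet_isCompact_preimage μ hp hfib hB
    (ENNReal.coe_ne_zero.2 hε.ne')
  rw [Measure.map_apply hp hB]
  exact hμ.trans (by gcongr; exact (h C hC hpC).trans (measure_mono (preimage_mono hCB)))

/-- The mass of a closed set is upper semicontinuous for the weak topology. -/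
lemma isClosed_setOf_le_measure {Y : Type*} [TopologicalSpace Y] [MeasurableSpace Y]
    [OpensMeasurableSpace Y] [HasOuterApproxClosed Y] {F : Set Y} (hF : IsClosed F) (c : ℝ≥0∞) :
    IsClosed {σ : ProbabilityMeasure Y | c ≤ (σ : Measure Y) F} := by
  refine isClosed_iff_ultrafilter.2 fun σ 𝒰 h𝒰 hmem ↦ ?_
  refine le_trans ?_ (ProbabilityMeasure.limsup_measure_closed_le_of_tendsto
    (μs := id) (L := (𝒰 : Filter (ProbabilityMeasure Y))) h𝒰 hF)
  exact le_limsup_of_frequently_le' (Eventually.frequently hmem)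

/-- A map to the base with countably many values can be matched by a measurable map to the
total space that hits a prescribed conull part of the range. -/
lemma exists_measurable_comp_ae_eq {X Y ι : Type*} [MeasurableSpace X] [MeasurableSpace Y]
    [Nonempty Y] [Countable ι] [MeasurableSpace ι] [MeasurableSingletonClass ι]
    {μ : Measure X} {p : Y → X} {G : Set X} (hGp : G ⊆ range p) (hG : ∀ᵐ x ∂μ, x ∈ G)
    {h : X → ι} (hh : Measurable h) :
    ∃ s : X → Y, Measurable s ∧ ∀ᵐ x ∂μ, p (s x) ∈ G ∧ h (p (s x)) = h x := by
  have hex (i : ι) : ∃ y : Y, i ∈ h '' G → p y ∈ G ∧ h (p y) = i := by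
    by_cases hi : i ∈ h '' G
    · obtain ⟨x, hx, rfl⟩ := hi
      obtain ⟨y, rfl⟩ := hGp hx
      exact ⟨y, fun _ ↦ ⟨hx, rfl⟩⟩
    · exact ⟨Classical.arbitrary Y, fun h ↦ absurd h hi⟩
  choose s hs using hex
  refine ⟨fun x ↦ s (h x), (measurable_of_countable s).comp hh, ?_⟩
  filter_upwards [hG] with x hx using hs _ ⟨x, hx, rfl⟩

/-- There is an increasing sequence of Borel sets with compact preimages exhausting `μ`. -/
lemma exists_monotone_isCompact_preimage {X : Type*} [MeasurableSpace X]
    [StandardBorelSpace X] (μ : Measure X) [IsFiniteMeasure μ]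
    {Y : Type*} [TopologicalSpace Y] [PolishSpace Y] [MeasurableSpace Y] [BorelSpace Y]
    {p : Y → X} (hp : Measurable p) (hfib : ∀ᵐ x ∂μ, IsCompact (p ⁻¹' {x}))
    {u : ℕ → ℝ≥0} (hu : ∀ n, 0 < u n) :
    ∃ C : ℕ → Set X, Monotone C ∧ (∀ n, MeasurableSet (C n)) ∧ (∀ n, IsCompact (p ⁻¹' C n)) ∧
      ∀ n, μ (C n)ᶜ ≤ u n := by
  choose D _ hD hpD hDu using fun n ↦ exists_measurableSet_isCompact_preimage μ hp hfib
    MeasurableSet.univ (ENNReal.coe_ne_zero.2 (hu n).ne')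
  refine ⟨accumulate D, monotone_accumulate, fun n ↦ ?_, fun n ↦ ?_, fun n ↦ ?_⟩
  · exact .biUnion (to_countable _) fun i _ ↦ hD i
  · simp only [accumulate, preimage_iUnion]
    exact (finite_Iic n).isCompact_biUnion fun i _ ↦ hpD i
  · refine (measure_mono (compl_subset_compl.2 subset_accumulate)).trans ?_
    rw [measure_compl (hD n) (measure_ne_top _ _), tsub_le_iff_left]
    exact hDu n

/-- Countably many increasing sets and finitely many further sets of the base can be given
their prescribed masses by a measure on the total space. -/
lemma exists_probabilityMeasure_preimage_eq {X Y : Type*} [MeasurableSpace X] [MeasurableSpace Y]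
    (μ : Measure X) [IsProbabilityMeasure μ] {p : Y → X} (hp : Measurable p)
    (hrange : ∀ᵐ x ∂μ, x ∈ range p) {C : ℕ → Set X} (hmono : Monotone C)
    (hC : ∀ n, MeasurableSet (C n)) (hCae : ∀ᵐ x ∂μ, x ∈ ⋃ n, C n)
    {ι : Type*} [Finite ι] {D : ι → Set X} (hD : ∀ i, MeasurableSet (D i)) :
    ∃ σ : ProbabilityMeasure Y, (∀ n, (σ : Measure Y) (p ⁻¹' C n) = μ (C n)) ∧
      ∀ i, (σ : Measure Y) (p ⁻¹' D i) = μ (D i) := by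
  classical
  have : Nonempty Y := by
    obtain ⟨_, y, _⟩ := hrange.exists
    exact ⟨y⟩
  have hfind (x : X) : ∃ n, x ∈ C n ∨ x ∉ ⋃ n, C n := by
    by_cases hx : x ∈ ⋃ n, C n
    · exact (mem_iUnion.1 hx).imp fun n ↦ Or.inl
    · exact ⟨0, Or.inr hx⟩
  let h : X → ℕ × (ι → Bool) := fun x ↦ (Nat.find (hfind x), fun i ↦ decide (x ∈ D i))
  have hh : Measurable h := by
    refine (measurable_find hfind fun n ↦ (hC n).union (MeasurableSet.iUnion hC).compl).prodMk
      (measurable_pi_iff.2 fun i ↦ measurable_to_bool ?_)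
    simpa [preimage] using hD i
  have hhC {x : X} (hx : x ∈ ⋃ n, C n) (n : ℕ) : x ∈ C n ↔ (h x).1 ≤ n := by
    simp only [h, Nat.find_le_iff, hx, not_true_eq_false, or_false]
    exact ⟨fun hn ↦ ⟨n, le_rfl, hn⟩, fun ⟨m, hm, hxm⟩ ↦ hmono hm hxm⟩
  have hhD (x : X) (i : ι) : x ∈ D i ↔ (h x).2 i = true := by simp [h]
  obtain ⟨s, hs, hsG⟩ := exists_measurable_comp_ae_eq (μ := μ) (p := p)
    (G := range p ∩ ⋃ n, C n) inter_subset_left (hrange.and hCae) hh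
  refine ⟨⟨μ.map s, Measure.isProbabilityMeasure_map hs.aemeasurable⟩, fun n ↦ ?_, fun i ↦ ?_⟩
  · rw [ProbabilityMeasure.coe_mk, Measure.map_apply hs (hp (hC n))]
    refine measure_congr ?_
    filter_upwards [hsG, hCae] with x ⟨hx, hxh⟩ hxC
    exact propext (by
      change p (s x) ∈ C n ↔ x ∈ C n
      rw [hhC hx.2, hhC hxC, hxh])
  · rw [ProbabilityMeasure.coe_mk, Measure.map_apply hs (hp (hD i))]
    refine measure_congr ?_
    filter_upwards [hsG] with x ⟨_, hxh⟩
    exact propext (by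
      change p (s x) ∈ D i ↔ x ∈ D i
      rw [hhD, hhD, hxh])

/-- **Lemma 3.1.** Let `X` be a standard Borel space with a Borel probability measure `μ`,
`Y` a Polish space, and `p : Y → X` a Borel map with `μ (range p) = 1` whose fibers are compact
for `μ`-a.e. `x`. Then the set `M` of Borel probability measures `σ` on `Y` with `p_* σ = μ` is a
non-empty, convex, compact subset of `P(Y)` with the weak* topology (the topology of weak
convergence on `MeasureTheory.ProbabilityMeasure Y`). Convexity is stated via the affine
structure on the underlying measures. -/
theorem lifts_nonempty_convex_compact
    {X : Type*} [MeasurableSpace X] [StandardBorelSpace X]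
    (μ : Measure X) [IsProbabilityMeasure μ]
    {Y : Type*} [TopologicalSpace Y] [PolishSpace Y] [MeasurableSpace Y] [BorelSpace Y]
    (p : Y → X) (hp : Measurable p)
    (hfull : μ (Set.range p) = 1)
    (hfib : ∀ᵐ x ∂μ, IsCompact (p ⁻¹' {x}))
    (M : Set (ProbabilityMeasure Y))
    (hM : M = {σ : ProbabilityMeasure Y | σ.toMeasure.map p = μ}) :
    M.Nonempty ∧ IsCompact M ∧
      (∀ σ ∈ M, ∀ τ ∈ M, ∀ a b : ℝ≥0∞, a + b = 1 →
        ∀ ρ : ProbabilityMeasure Y,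
          ρ.toMeasure = a • σ.toMeasure + b • τ.toMeasure → ρ ∈ M) := by
  subst hM
  have hrange : ∀ᵐ x ∂μ, x ∈ range p := by
    have hnull : NullMeasurableSet (range p) μ :=
      image_univ (f := p) ▸ MeasurableSet.univ.nullMeasurableSet_image hp μ
    exact (ae_iff_measure_eq hnull).2 (hfull.trans measure_univ.symm)
  obtain ⟨u, -, hu, hulim⟩ := exists_seq_strictAnti_tendsto (0 : ℝ≥0)
  obtain ⟨C, hmono, hC, hpC, hCu⟩ := exists_monotone_isCompact_preimage μ hp hfib hu
  have hCae : ∀ᵐ x ∂μ, x ∈ ⋃ n, C n := by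
    refine mem_ae_iff.2 (le_antisymm ?_ zero_le)
    refine ge_of_tendsto' (ENNReal.tendsto_coe.2 hulim) fun n ↦ ?_
    exact (measure_mono (compl_subset_compl.2 (subset_iUnion C n))).trans (hCu n)
  let T : Set (ProbabilityMeasure Y) := {σ | ∀ n, σ (p ⁻¹' C n)ᶜ ≤ u n}
  have hT : IsCompact T := isCompact_setOfPred_probabilityMeasure_mass_eq_compl_isCompact_le
    hulim hpC (.inl inferInstance)
  have hmemT (σ : ProbabilityMeasure Y) (h : ∀ n, (σ : Measure Y) (p ⁻¹' C n) = μ (C n)) :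
      σ ∈ T := by
    intro n
    rw [← ENNReal.coe_le_coe, ProbabilityMeasure.ennreal_coeFn_eq_coeFn_toMeasure,
      prob_compl_eq_one_sub (hp (hC n)), h, ← prob_compl_eq_one_sub (hC n)]
    exact hCu n
  let Z : {D : Set X // MeasurableSet D ∧ IsCompact (p ⁻¹' D)} → Set (ProbabilityMeasure Y) :=
    fun D ↦ {σ | μ D ≤ (σ : Measure Y) (p ⁻¹' D)}
  have hZ (D) : IsClosed (Z D) := isClosed_setOf_le_measure D.2.2.isClosed _
  have hMeq : {σ : ProbabilityMeasure Y | σ.toMeasure.map p = μ} = T ∩ ⋂ D, Z D := by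
    ext σ
    constructor
    · intro hσ
      have happly {D : Set X} (hD : MeasurableSet D) : (σ : Measure Y) (p ⁻¹' D) = μ D := by
        rw [← Measure.map_apply hp hD, show σ.toMeasure.map p = μ from hσ]
      exact ⟨hmemT σ fun n ↦ happly (hC n), mem_iInter.2 fun D ↦ (happly D.2.1).ge⟩
    · intro hσ
      exact map_eq_of_forall_isCompact_preimage_le μ hp hfib σ fun D hD hpD ↦
        mem_iInter.1 hσ.2 ⟨D, hD, hpD⟩
  refine ⟨?_, ?_, ?_⟩
  · rw [hMeq]
    refine hT.inter_iInter_nonempty Z hZ fun F ↦ ?_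
    obtain ⟨σ, hσC, hσF⟩ := exists_probabilityMeasure_preimage_eq μ hp hrange hmono hC hCae
      (D := fun D : F ↦ D.1.1) fun D ↦ D.1.2.1
    exact ⟨σ, hmemT σ hσC, mem_iInter₂.2 fun D hD ↦ (hσF ⟨D, hD⟩).ge⟩
  · rw [hMeq]
    exact hT.inter_right (isClosed_iInter hZ)
  · intro σ hσ τ hτ a b hab ρ hρ
    have hσ' : σ.toMeasure.map p = μ := hσ
    have hτ' : τ.toMeasure.map p = μ := hτ
    change ρ.toMeasure.map p = μ
    rw [hρ, Measure.map_add _ _ hp, Measure.map_smul, Measure.map_smul, hσ', hτ', ← add_smul, hab,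
      one_smul]
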